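/- arXiv:2202.09008 — 6 statements merged into one kernel-verified Lean document; each statement's English description precedes it below -/
import Mathlib

section
/- For every 2k-element subset S^{2k} of {1,…,n} and every real-valued function g on k-element subsets of {1,…,n}, the following exact algebraic identities hold: ψ_k(S^{2k}) − ψ_0(S^{2k}) = ∑_{d=0}^{k} w_d · φ_d(S^{2k}), and, since ∑_{d=0}^{k} w_d = 0, this also equals ∑_{d=1}^{k} w_d · (φ_d(S^{2k}) − φ_0(S^{2k})). -/
/-!
Statement 6: the exact algebraic identities
`ψ_k(S^{2k}) - ψ_0(S^{2k}) = ∑_{d=0}^k w_d φ_d(S^{2k})`, `∑_{d=0}^k w_d = 0`, and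
`ψ_k(S^{2k}) - ψ_0(S^{2k}) = ∑_{d=1}^k w_d (φ_d(S^{2k}) - φ_0(S^{2k}))`.
-/

open Finset

noncomputable section

/-- `M_{d,k}`, the number of ordered pairs of `k`-subsets of a `2k`-set
with intersection of size `d`. -/
def Mdk (k d : ℕ) : ℕ :=
  (2 * k).choose d * (2 * k - d).choose d * (2 * k - 2 * d).choose (k - d)

/-- `N_d = C(n - 2k + d, d)`. -/
def Nd (n k d : ℕ) : ℕ := (n - 2 * k + d).choose d

/-- Sum of `g(S₁) g(S₂)` over ordered pairs of `k`-subsets of `S2k` with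
intersection of size `d`. -/
def pairSum (n k : ℕ) (g : Finset (Fin n) → ℝ) (d : ℕ) (S2k : Finset (Fin n)) : ℝ :=
  ∑ S₁ ∈ Finset.powersetCard k S2k, ∑ S₂ ∈ Finset.powersetCard k S2k,
    if (S₁ ∩ S₂).card = d then g S₁ * g S₂ else 0

/-- `φ_d(S^{2k})`. -/
def phiD (n k : ℕ) (g : Finset (Fin n) → ℝ) (d : ℕ) (S2k : Finset (Fin n)) : ℝ :=
  (Mdk k d : ℝ)⁻¹ * pairSum n k g d S2k

/-- `ψ_{k'}(S^{2k})`. -/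
def psiD (n k : ℕ) (g : Finset (Fin n) → ℝ) (k' : ℕ) (S2k : Finset (Fin n)) : ℝ :=
  (n.choose (2 * k) : ℝ) * (n.choose k : ℝ)⁻¹ * ((n - k + k').choose k : ℝ)⁻¹ *
    ∑ d ∈ Finset.range (k' + 1), (Nd n k d : ℝ)⁻¹ * pairSum n k g d S2k

/-- The weights `w_d`. -/
def wgt (n k d : ℕ) : ℝ :=
  if d = 0 then
    ((n.choose k : ℝ)⁻¹ - ((n - k).choose k : ℝ)⁻¹) * (n.choose k : ℝ)⁻¹ *
      (n.choose (2 * k) : ℝ) * ((2 * k).choose k : ℝ)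
  else
    (n.choose (2 * k) : ℝ) * ((n.choose k : ℝ)⁻¹) ^ 2 * (Mdk k d : ℝ) / (Nd n k d : ℝ)

/-!
Let `p_d` be the probability that two independent uniform `k`-subsets of an `n`-set meet in
exactly `d` elements, a hypergeometric law. Double counting gives `C(n, 2k) M_d = N_d C(n, k)² p_d`,
hence `ψ_k = ∑ p_d φ_d`, while `ψ_0 = φ_0` and `w_d = p_d - [d = 0]`. The weights sum to zero
because `p` has total mass one, which is Vandermonde's identity.
-/

section Counting

lemma cast_choose_ne_zero {R : Type*} [AddMonoidWithOne R] [CharZero R] {n k : ℕ} (h : k ≤ n) :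
    (n.choose k : R) ≠ 0 :=
  Nat.cast_ne_zero.2 (Nat.choose_pos h).ne'

lemma Mdk_eq_choose_mul_choose_sq {k d : ℕ} (hd : d ≤ k) :
    Mdk k d = (2 * k).choose k * k.choose d ^ 2 := by
  have hkd : (2 * k - d).choose d * (2 * k - 2 * d).choose (k - d) =
      (2 * k - d).choose k * k.choose d := by
    rw [Nat.choose_mul hd, Nat.sub_sub, two_mul d]
  have hdk : (2 * k).choose d * (2 * k - d).choose k = (2 * k).choose k * k.choose d := by
    rw [Nat.choose_mul hd, Nat.choose_symm_of_eq_add (show 2 * k - d = k + (k - d) by omega)]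
  rw [Mdk, mul_assoc, hkd, ← mul_assoc, hdk, mul_assoc, sq]

lemma Mdk_pos {k d : ℕ} (hd : d ≤ k) : 0 < Mdk k d := by
  rw [Mdk_eq_choose_mul_choose_sq hd]
  exact Nat.mul_pos (Nat.choose_pos (by omega)) (pow_pos (Nat.choose_pos hd) 2)

lemma Nd_pos (n k d : ℕ) : 0 < Nd n k d :=
  Nat.choose_pos (Nat.le_add_left d _)

lemma choose_two_mul_mul_choose_self (n k : ℕ) :
    n.choose (2 * k) * (2 * k).choose k = n.choose k * (n - k).choose k := by
  rw [Nat.choose_mul (by omega), two_mul, Nat.add_sub_cancel]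

lemma choose_sub_mul_choose {n k d : ℕ} (hn : 2 * k ≤ n) (hd : d ≤ k) :
    (n - k).choose k * k.choose d = Nd n k d * (n - k).choose (k - d) := by
  rw [← Nat.choose_symm hd, Nat.choose_mul (Nat.sub_le k d), Nat.sub_sub_self hd, Nd,
    show n - k - (k - d) = n - 2 * k + d by omega, mul_comm]

lemma choose_two_mul_mul_Mdk {n k d : ℕ} (hn : 2 * k ≤ n) (hd : d ≤ k) :
    n.choose (2 * k) * Mdk k d =
      Nd n k d * (n.choose k * (k.choose d * (n - k).choose (k - d))) :=
  calc n.choose (2 * k) * Mdk k d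
      = n.choose (2 * k) * (2 * k).choose k * k.choose d ^ 2 := by
        rw [Mdk_eq_choose_mul_choose_sq hd, mul_assoc]
    _ = n.choose k * k.choose d * ((n - k).choose k * k.choose d) := by
        rw [choose_two_mul_mul_choose_self]; ring
    _ = Nd n k d * (n.choose k * (k.choose d * (n - k).choose (k - d))) := by
        rw [choose_sub_mul_choose hn hd]; ring

end Counting

section Hypergeometric

/-- The mass at `d` of the hypergeometric distribution: the probability that a uniformly random
`m`-subset of an `n`-set meets a fixed `s`-subset in exactly `d` elements. Since `m - d` is
truncated, this reading requires `d ≤ m`. -/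
def hypergeometricMass (n s m d : ℕ) : ℝ :=
  (s.choose d * (n - s).choose (m - d) : ℕ) / (n.choose m : ℝ)

lemma sum_hypergeometricMass {n s m : ℕ} (hs : s ≤ n) (hm : m ≤ n) :
    ∑ d ∈ range (m + 1), hypergeometricMass n s m d = 1 := by
  have vandermonde :
      ∑ d ∈ range (m + 1), s.choose d * (n - s).choose (m - d) = n.choose m := by
    rw [← Finset.Nat.sum_antidiagonal_eq_sum_range_succ fun i j ↦ s.choose i * (n - s).choose j,
      ← Nat.add_choose_eq, Nat.add_sub_cancel' hs]
  have hpos : (n.choose m : ℝ) ≠ 0 := cast_choose_ne_zero hm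
  simp only [hypergeometricMass]
  rw [← sum_div, ← Nat.cast_sum, vandermonde, div_self hpos]

lemma hypergeometricMass_zero (n s m : ℕ) :
    hypergeometricMass n s m 0 = (n - s).choose m / (n.choose m : ℝ) := by
  simp [hypergeometricMass]

lemma hypergeometricMass_self {n k d : ℕ} (hn : 2 * k ≤ n) (hd : d ≤ k) :
    hypergeometricMass n k k d =
      (n.choose (2 * k) : ℝ) * ((n.choose k : ℝ)⁻¹) ^ 2 * (Mdk k d : ℝ) / (Nd n k d : ℝ) := by
  have hcount := congrArg (Nat.cast (R := ℝ)) (choose_two_mul_mul_Mdk hn hd)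
  have hN : (Nd n k d : ℝ) ≠ 0 := Nat.cast_ne_zero.2 (Nd_pos n k d).ne'
  have hC : (n.choose k : ℝ) ≠ 0 := cast_choose_ne_zero (by omega)
  rw [hypergeometricMass]
  push_cast at hcount ⊢
  field_simp
  linear_combination -hcount

end Hypergeometric

section Weights

lemma wgt_eq_hypergeometricMass_sub {n k d : ℕ} (hn : 2 * k ≤ n) (hd : d ≤ k) :
    wgt n k d = hypergeometricMass n k k d - if d = 0 then 1 else 0 := by
  rcases eq_or_ne d 0 with rfl | hd0
  · have hchoose := congrArg (Nat.cast (R := ℝ)) (choose_two_mul_mul_choose_self n k)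
    have hC : (n.choose k : ℝ) ≠ 0 := cast_choose_ne_zero (by omega)
    have hC' : ((n - k).choose k : ℝ) ≠ 0 := cast_choose_ne_zero (by omega)
    push_cast at hchoose
    simp only [wgt, if_true, hypergeometricMass_zero]
    rw [mul_assoc _ (n.choose (2 * k) : ℝ), hchoose]
    field_simp
  · rw [wgt, if_neg hd0, if_neg hd0, sub_zero, hypergeometricMass_self hn hd]

lemma sum_wgt_mul {n k : ℕ} (hn : 2 * k ≤ n) (f : ℕ → ℝ) :
    ∑ d ∈ range (k + 1), wgt n k d * f d =
      ∑ d ∈ range (k + 1), hypergeometricMass n k k d * f d - f 0 :=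
  calc ∑ d ∈ range (k + 1), wgt n k d * f d
      = ∑ d ∈ range (k + 1), (hypergeometricMass n k k d * f d - if d = 0 then f d else 0) :=
        sum_congr rfl fun d hd ↦ by
          rw [wgt_eq_hypergeometricMass_sub hn (mem_range_succ_iff.1 hd), sub_mul, ite_mul,
            one_mul, zero_mul]
    _ = ∑ d ∈ range (k + 1), hypergeometricMass n k k d * f d - f 0 := by
        rw [sum_sub_distrib, sum_ite_eq' _ _ f, if_pos (mem_range.2 k.succ_pos)]

lemma sum_wgt {n k : ℕ} (hn : 2 * k ≤ n) : ∑ d ∈ range (k + 1), wgt n k d = 0 := by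
  have hkn : k ≤ n := by omega
  simpa [sum_hypergeometricMass hkn hkn] using sum_wgt_mul hn 1

lemma sum_range_mul_eq_sum_Icc_mul_sub {R : Type*} [Ring R] {k : ℕ} {w : ℕ → R}
    (hw : ∑ d ∈ range (k + 1), w d = 0) (f : ℕ → R) :
    ∑ d ∈ range (k + 1), w d * f d = ∑ d ∈ Icc 1 k, w d * (f d - f 0) :=
  calc ∑ d ∈ range (k + 1), w d * f d
      = ∑ d ∈ range (k + 1), w d * (f d - f 0) := by
        simp only [mul_sub, sum_sub_distrib, ← sum_mul, hw, zero_mul, sub_zero]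
    _ = ∑ d ∈ Icc 1 k, w d * (f d - f 0) := by
        rw [sum_range_eq_add_Ico _ k.add_one_pos, sub_self, mul_zero, zero_add,
          Ico_add_one_right_eq_Icc]

end Weights

section Psi

variable {n k : ℕ} (g : Finset (Fin n) → ℝ) (S : Finset (Fin n))

lemma psiD_eq_sum_hypergeometricMass_mul_phiD {k' : ℕ} (hn : 2 * k ≤ n) (hk' : k' ≤ k) :
    psiD n k g k' S = (n.choose k / (n - k + k').choose k : ℝ) *
      ∑ d ∈ range (k' + 1), hypergeometricMass n k k d * phiD n k g d S := by
  rw [psiD, mul_sum, mul_sum]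
  refine sum_congr rfl fun d hd ↦ ?_
  have hdk : d ≤ k := (mem_range_succ_iff.1 hd).trans hk'
  have hM : (Mdk k d : ℝ) ≠ 0 := Nat.cast_ne_zero.2 (Mdk_pos hdk).ne'
  have hC : (n.choose k : ℝ) ≠ 0 := cast_choose_ne_zero (by omega)
  rw [hypergeometricMass_self hn hdk, phiD]
  field_simp

lemma psiD_self (hn : 2 * k ≤ n) :
    psiD n k g k S = ∑ d ∈ range (k + 1), hypergeometricMass n k k d * phiD n k g d S := by
  have hkn : k ≤ n := by omega
  have hC : (n.choose k : ℝ) ≠ 0 := cast_choose_ne_zero hkn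
  rw [psiD_eq_sum_hypergeometricMass_mul_phiD g S hn le_rfl, Nat.sub_add_cancel hkn, div_self hC,
    one_mul]

lemma psiD_zero (hn : 2 * k ≤ n) : psiD n k g 0 S = phiD n k g 0 S := by
  have hC : (n.choose k : ℝ) ≠ 0 := cast_choose_ne_zero (by omega)
  have hC' : ((n - k).choose k : ℝ) ≠ 0 := cast_choose_ne_zero (by omega)
  rw [psiD_eq_sum_hypergeometricMass_mul_phiD g S hn k.zero_le, zero_add, sum_range_one,
    hypergeometricMass_zero, add_zero]
  field_simp

end Psi

theorem psi_eq_weighted_phi_general (n k : ℕ) (hn : 2 * k ≤ n)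
    (g : Finset (Fin n) → ℝ) (S : Finset (Fin n)) :
    (psiD n k g k S - psiD n k g 0 S
        = ∑ d ∈ Finset.range (k + 1), wgt n k d * phiD n k g d S) ∧
    (∑ d ∈ Finset.range (k + 1), wgt n k d = 0) ∧
    (psiD n k g k S - psiD n k g 0 S
        = ∑ d ∈ Finset.Icc 1 k, wgt n k d * (phiD n k g d S - phiD n k g 0 S)) := by
  have hψ : psiD n k g k S - psiD n k g 0 S
      = ∑ d ∈ range (k + 1), wgt n k d * phiD n k g d S := by
    rw [psiD_self g S hn, psiD_zero g S hn, sum_wgt_mul hn fun d ↦ phiD n k g d S]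
  have hw : ∑ d ∈ range (k + 1), wgt n k d = 0 := sum_wgt hn
  exact ⟨hψ, hw, hψ.trans (sum_range_mul_eq_sum_Icc_mul_sub hw fun d ↦ phiD n k g d S)⟩

theorem psi_eq_weighted_phi (n k : ℕ) (hk : 1 ≤ k) (hn : 2 * k ≤ n)
    (g : Finset (Fin n) → ℝ) (S2k : Finset (Fin n)) (hS : S2k.card = 2 * k) :
    (psiD n k g k S2k - psiD n k g 0 S2k
        = ∑ d ∈ Finset.range (k + 1), wgt n k d * phiD n k g d S2k) ∧
    (∑ d ∈ Finset.range (k + 1), wgt n k d = 0) ∧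
    (psiD n k g k S2k - psiD n k g 0 S2k
        = ∑ d ∈ Finset.Icc 1 k, wgt n k d * (phiD n k g d S2k - phiD n k g 0 S2k)) :=
  psi_eq_weighted_phi_general n k hn g S2k

end
end

section
/- For integers k ≥ 1, n ≥ 2k, and every 1 ≤ d ≤ k, the weight w_d satisfies the explicit bound w_d ≤ k^{2d} / (d! · (n−k+1)^d). (This is the explicit inequality established in the paper's proof of the bound w_d = O(k^{2d}/(d! n^d)).) -/
/-!
Statement 8: for `1 ≤ d ≤ k` and `n ≥ 2k`, the weight `w_d` satisfies
`w_d ≤ k^{2d} / (d! (n-k+1)^d)`.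
-/

open Finset

noncomputable section

/-!
In falling factorials the weight collapses to
`w_d = (k)_d ^ 2 * (n - k)_{k - d} / (d! * (n)_k)`. The numerator has `(k)_d ≤ k ^ d`. In the
denominator, the last `d` factors of `(n)_k` are each at least `n - k + 1`, and the remaining
product `(n)_{k - d}` dominates `(n - k)_{k - d}`.
-/

section

open scoped Nat

variable {n k d : ℕ}

theorem descFactorial_mul_pow_le_descFactorial_add (m j d : ℕ) :
    m.descFactorial j * (m + 1) ^ d ≤ (m + j + d).descFactorial (j + d) := by
  have hpow : (m + 1) ^ d ≤ (m + d).descFactorial d := by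
    rw [Nat.add_descFactorial_eq_ascFactorial]
    exact Nat.pow_succ_le_ascFactorial (m + 1) d
  calc m.descFactorial j * (m + 1) ^ d
      ≤ (m + j + d).descFactorial j * (m + d).descFactorial d :=
        Nat.mul_le_mul (Nat.descFactorial_le j (by lia)) hpow
    _ = (m + j + d).descFactorial (j + d) := by
        rw [← Nat.descFactorial_mul_descFactorial (Nat.le_add_right j d), Nat.add_sub_cancel_left,
          Nat.add_right_comm m j d, Nat.add_sub_cancel, mul_comm]

theorem descFactorial_sub_mul_pow_le_descFactorial (hdk : d ≤ k) (hkn : k ≤ n) :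
    (n - k).descFactorial (k - d) * (n - k + 1) ^ d ≤ n.descFactorial k := by
  have h := descFactorial_mul_pow_le_descFactorial_add (n - k) (k - d) d
  rwa [add_assoc, Nat.sub_add_cancel hdk, Nat.sub_add_cancel hkn] at h

theorem descFactorial_sub_div_descFactorial_le (hdk : d ≤ k) (hkn : k ≤ n) :
    ((n - k).descFactorial (k - d) : ℝ) / n.descFactorial k ≤ 1 / ((n : ℝ) - k + 1) ^ d := by
  have hfalling : (0 : ℝ) < n.descFactorial k := mod_cast Nat.descFactorial_pos.2 hkn
  rw [← Nat.cast_sub hkn, div_le_div_iff₀ hfalling (by positivity), one_mul]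
  exact_mod_cast descFactorial_sub_mul_pow_le_descFactorial hdk hkn

theorem Mdk_mul_factorial_sq_mul_factorial_sq (hdk : d ≤ k) :
    Mdk k d * d ! ^ 2 * (k - d)! ^ 2 = (2 * k)! := by
  have hfirst := Nat.choose_mul_factorial_mul_factorial (show d ≤ 2 * k by lia)
  have hsecond := Nat.choose_mul_factorial_mul_factorial (show d ≤ 2 * k - d by lia)
  have hthird := Nat.choose_mul_factorial_mul_factorial (show k - d ≤ 2 * k - 2 * d by lia)
  rw [show 2 * k - d - d = 2 * k - 2 * d by lia] at hsecond
  rw [show 2 * k - 2 * d - (k - d) = k - d by lia] at hthird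
  rw [← hfirst, ← hsecond, ← hthird, Mdk]
  ring

theorem choose_two_mul_mul_factorial (hdk : d ≤ k) (hn : 2 * k ≤ n) :
    n.choose (2 * k) * (2 * k)! =
      n.descFactorial k * (n - k).descFactorial (k - d) * (Nd n k d * d !) := by
  have hsplit_k := Nat.descFactorial_mul_descFactorial (n := n) (show k ≤ 2 * k by lia)
  have hsplit_d := Nat.descFactorial_mul_descFactorial (n := n - k) (Nat.sub_le k d)
  rw [show 2 * k - k = k by lia] at hsplit_k
  rw [show n - k - (k - d) = n - 2 * k + d by lia, Nat.sub_sub_self hdk] at hsplit_d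
  rw [Nd, mul_comm, ← Nat.descFactorial_eq_factorial_mul_choose, ← hsplit_k, ← hsplit_d,
    Nat.descFactorial_eq_factorial_mul_choose (n - 2 * k + d) d]
  ring

theorem wgt_eq_descFactorial (hd : 1 ≤ d) (hdk : d ≤ k) (hn : 2 * k ≤ n) :
    wgt n k d =
      (k.descFactorial d : ℝ) ^ 2 * (n - k).descFactorial (k - d) / (d ! * n.descFactorial k) := by
  have hchoose_two_mul : (n.choose (2 * k) : ℝ) =
      n.descFactorial k * (n - k).descFactorial (k - d) * (Nd n k d * d !) / (2 * k)! := by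
    rw [eq_div_iff (by positivity)]
    exact_mod_cast choose_two_mul_mul_factorial hdk hn
  have hchoose : (n.choose k : ℝ) = n.descFactorial k / k ! := by
    rw [Nat.descFactorial_eq_factorial_mul_choose, Nat.cast_mul,
      mul_div_cancel_left₀ _ (by positivity)]
  have hMdk : (Mdk k d : ℝ) = (2 * k)! / (d ! ^ 2 * (k - d)! ^ 2) := by
    rw [eq_div_iff (by positivity), ← mul_assoc]
    exact_mod_cast Mdk_mul_factorial_sq_mul_factorial_sq hdk
  have hfactorial : (k ! : ℝ) = (k - d)! * k.descFactorial d :=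
    mod_cast (Nat.factorial_mul_descFactorial hdk).symm
  have hfalling : (n.descFactorial k : ℝ) ≠ 0 :=
    mod_cast (Nat.descFactorial_pos.2 (by lia)).ne'
  have hNd : (Nd n k d : ℝ) ≠ 0 := mod_cast (Nat.choose_pos (Nat.le_add_left d _)).ne'
  rw [wgt, if_neg (by lia), hchoose_two_mul, hchoose, hMdk, hfactorial]
  field_simp

end

theorem weight_explicit_bound (n k : ℕ) (hk : 1 ≤ k) (hn : 2 * k ≤ n) :
    ∀ d, 1 ≤ d → d ≤ k →
      wgt n k d ≤ (k : ℝ) ^ (2 * d) / ((d.factorial : ℝ) * ((n : ℝ) - k + 1) ^ d) := by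
  intro d hd hdk
  have hpow : (k.descFactorial d : ℝ) ≤ k ^ d := mod_cast k.descFactorial_le_pow d
  have hratio := descFactorial_sub_div_descFactorial_le hdk (show k ≤ n by lia)
  calc wgt n k d
      = (k.descFactorial d : ℝ) ^ 2 / d.factorial *
          ((n - k).descFactorial (k - d) / n.descFactorial k) := by
        rw [wgt_eq_descFactorial hd hdk hn, mul_div_mul_comm]
    _ ≤ ((k : ℝ) ^ d) ^ 2 / d.factorial * (1 / (n - k + 1) ^ d) := by gcongr
    _ = (k : ℝ) ^ (2 * d) / (d.factorial * (n - k + 1) ^ d) := by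
        rw [← pow_mul, mul_comm d 2, div_mul_div_comm, mul_one]

end
end

section
/- For integers n, k, c with 1 ≤ c ≤ k ≤ n and n ≥ k+2, the hypergeometric coefficient satisfies C(n,k)^{-1} C(k,c) C(n−k,k−c) ≤ (1/c!) · (k² / (n−k−1))^c. -/
/-!
If two `k`-subsets of an `n`-set meet in exactly `c` points, then some `c`-subset of the first lies
in the second. A union bound over the `C(k,c)` such subsets, each contained in the second set with
probability `C(n-c,k-c) / C(n,k) = C(k,c) / C(n,c)`, bounds the hypergeometric coefficient by
`C(k,c)² / C(n,c)`. The estimates `C(k,c) ≤ k^c / c!` and `(n-c+1)^c / c! ≤ C(n,c)` then give a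
bound with `n - c + 1` in place of the smaller `n - k - 1`.
-/

section

variable {K : Type*} [Field K] [LinearOrder K] [IsStrictOrderedRing K] {n k c : ℕ}

theorem choose_mul_choose_sub_le (hck : c ≤ k) :
    n.choose c * (n - k).choose (k - c) ≤ n.choose k * k.choose c :=
  calc n.choose c * (n - k).choose (k - c)
      ≤ n.choose c * (n - c).choose (k - c) := by gcongr
    _ = n.choose k * k.choose c := (Nat.choose_mul hck).symm

theorem hypergeometric_coeff_le_choose_sq_div_choose (hck : c ≤ k) (hkn : k ≤ n) :
    (n.choose k : K)⁻¹ * (k.choose c : K) * ((n - k).choose (k - c) : K)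
      ≤ (k.choose c : K) ^ 2 / (n.choose c : K) := by
  have hnk : (0 : K) < n.choose k := mod_cast Nat.choose_pos hkn
  have hnc : (0 : K) < n.choose c := mod_cast Nat.choose_pos (hck.trans hkn)
  have union_bound : ((n - k).choose (k - c) : K) / n.choose k ≤ k.choose c / n.choose c := by
    rw [div_le_div_iff₀ hnk hnc, mul_comm, mul_comm (k.choose c : K)]
    exact mod_cast choose_mul_choose_sub_le hck
  calc (n.choose k : K)⁻¹ * k.choose c * (n - k).choose (k - c)
      = k.choose c * ((n - k).choose (k - c) / n.choose k) := by ring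
    _ ≤ k.choose c * (k.choose c / n.choose c) := by gcongr
    _ = (k.choose c : K) ^ 2 / n.choose c := by ring

theorem choose_sq_div_choose_le (hcn : c ≤ n) :
    (k.choose c : K) ^ 2 / (n.choose c : K)
      ≤ (1 / (c.factorial : K)) * ((k : K) ^ 2 / ((n : K) - c + 1)) ^ c := by
  have hcn' : (0 : K) < n - c + 1 := by
    have : (c : K) ≤ n := mod_cast hcn
    linarith
  have upper : (k.choose c : K) ≤ k ^ c / c.factorial := Nat.choose_le_pow_div c k
  have lower : ((n : K) - c + 1) ^ c / c.factorial ≤ n.choose c := by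
    have h := Nat.pow_le_choose (α := K) c n
    rwa [Nat.cast_sub (by omega), Nat.cast_add_one, add_sub_right_comm] at h
  calc (k.choose c : K) ^ 2 / n.choose c
      ≤ (k ^ c / c.factorial) ^ 2 / (((n : K) - c + 1) ^ c / c.factorial) := by gcongr
    _ = 1 / c.factorial * (k ^ 2 / ((n : K) - c + 1)) ^ c := by
      rw [div_pow (_ ^ 2), pow_right_comm (k : K)]
      field_simp

theorem hypergeometric_coeff_bound_general (hck : c ≤ k) (hkn : k ≤ n) :
    (n.choose k : K)⁻¹ * (k.choose c : K) * ((n - k).choose (k - c) : K)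
      ≤ (1 / (c.factorial : K)) * ((k : K) ^ 2 / ((n : K) - c + 1)) ^ c :=
  (hypergeometric_coeff_le_choose_sq_div_choose hck hkn).trans
    (choose_sq_div_choose_le (hck.trans hkn))

end

theorem hypergeometric_coeff_bound (n k c : ℕ)
    (hc : 1 ≤ c) (hck : c ≤ k) (hkn : k ≤ n) (hn : k + 2 ≤ n) :
    (n.choose k : ℝ)⁻¹ * (k.choose c : ℝ) * ((n - k).choose (k - c) : ℝ)
      ≤ (1 / (c.factorial : ℝ)) * ((k : ℝ) ^ 2 / ((n : ℝ) - k - 1)) ^ c := by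
  have hck' : (c : ℝ) ≤ k := mod_cast hck
  have hn' : (k : ℝ) + 2 ≤ n := mod_cast hn
  have hpos : (0 : ℝ) < n - k - 1 := by linarith
  have hle : (n : ℝ) - k - 1 ≤ n - c + 1 := by linarith
  have hpos' : (0 : ℝ) < n - c + 1 := hpos.trans_le hle
  refine (hypergeometric_coeff_bound_general hck hkn).trans ?_
  gcongr
end

section
/- For integers k ≥ 1, 0 ≤ d ≤ k, and nonnegative integers x₁, x₂ with x₁ ≤ k−d and x₂ ≤ k−d, the ratio of hypergeometric coefficients satisfies the sandwich inequality ((k−d+1−x₁)/(k−d+1))^d · ((k−d+1−x₂)/(k−d+1))^d ≤ [C(k−d,x₁) C(k−d,x₂)] / [C(k,x₁) C(k,x₂)] ≤ ((k−x₁)/k)^d · ((k−x₂)/k)^d. In particular the difference between the two hypergeometric probabilities p_{(x₀,x₁,x₂,d,c)} and p_{(x₀,x₁,x₂,0,c)} in the case x₁ + x₂ = c is O(1/k). -/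
/-!
Statement 14: sandwich inequality for the ratio of hypergeometric coefficients
`C(k-d,x₁) C(k-d,x₂) / (C(k,x₁) C(k,x₂))`, and the `O(1/k)` bound on the
difference of the two hypergeometric probabilities in the case `x₁ + x₂ = c`.
-/

open Filter

noncomputable section

/-- The hypergeometric probability `p_{(x₀,x₁,x₂,d,c)}`. -/
def hgProb (k d c x₀ x₁ x₂ : ℕ) : ℝ :=
  ((d.choose x₀ : ℝ) * ((k - d).choose x₁ : ℝ) * ((k - d).choose x₂ : ℝ) *
    (d.choose (c - x₀ - x₁ - x₂) : ℝ)) / ((2 * k).choose c : ℝ)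

/-!
The ratio `C(m, x) / C(m + d, x)` telescopes into the product of the `d` factors
`1 - x / (m + i + 1)`, `i < d`, which increase with `i`; the sandwich compares each of them with
the first and the last one. Bernoulli's inequality turns the lower bound into
`1 - d * x / (m + 1)`, so the ratio of the two probabilities is `1 - O(1 / k)`, while the
probability at `d = 0` is at most `1`.
-/

open Asymptotics

section ChooseRatio

variable {K : Type*} [Field K] {m x : ℕ}

theorem choose_div_choose_add_eq_prod [CharZero K] (hx : x ≤ m) (d : ℕ) :
    (m.choose x : K) / ((m + d).choose x : K) =
      ∏ i ∈ Finset.range d, (1 - (x : K) / ((m : K) + i + 1)) := by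
  have choose_ne_zero (n : ℕ) : ((m + n).choose x : K) ≠ 0 :=
    Nat.cast_ne_zero.2 (Nat.choose_pos (hx.trans (m.le_add_right n))).ne'
  induction d with
  | zero =>
    rw [Finset.prod_range_zero]
    exact div_self (choose_ne_zero 0)
  | succ d ih =>
    have hmd : (m : K) + d + 1 ≠ 0 := by exact_mod_cast (m + d).succ_ne_zero
    have choose_succ : ((m + d).choose x : K) * ((m : K) + d + 1) =
        ((m + (d + 1)).choose x : K) * ((m : K) + d + 1 - x) := by
      have h := congrArg (Nat.cast : ℕ → K) (Nat.choose_mul_succ_eq (m + d) x)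
      rw [Nat.cast_mul, Nat.cast_mul, Nat.cast_sub (by omega)] at h
      exact_mod_cast h
    rw [Finset.prod_range_succ, ← ih, one_sub_div hmd, div_mul_div_comm,
      div_eq_div_iff (choose_ne_zero _) (mul_ne_zero (choose_ne_zero d) hmd), choose_succ]
    ring

variable [LinearOrder K] [IsStrictOrderedRing K]

theorem one_sub_natCast_div_natCast_nonneg {n x : ℕ} (hx : x ≤ n) : 0 ≤ 1 - (x : K) / (n : K) :=
  sub_nonneg.2 (div_le_one_of_le₀ (Nat.cast_le.2 hx) n.cast_nonneg)

theorem one_sub_div_pow_le_choose_div_choose_add (hx : x ≤ m) (d : ℕ) :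
    (1 - (x : K) / ((m : K) + 1)) ^ d ≤ (m.choose x : K) / ((m + d).choose x : K) := by
  have first_nonneg : 0 ≤ 1 - (x : K) / ((m : K) + 1) := by
    exact_mod_cast one_sub_natCast_div_natCast_nonneg (K := K) (hx.trans m.le_succ)
  calc (1 - (x : K) / ((m : K) + 1)) ^ d
      = ∏ _i ∈ Finset.range d, (1 - (x : K) / ((m : K) + 1)) := by
        rw [Finset.prod_const, Finset.card_range]
    _ ≤ ∏ i ∈ Finset.range d, (1 - (x : K) / ((m : K) + i + 1)) := by
        refine Finset.prod_le_prod (fun _ _ ↦ first_nonneg) fun i _ ↦ ?_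
        gcongr
        exact le_add_of_nonneg_right i.cast_nonneg
    _ = (m.choose x : K) / ((m + d).choose x : K) := (choose_div_choose_add_eq_prod hx d).symm

theorem choose_div_choose_add_le_one_sub_div_pow (hx : x ≤ m) (d : ℕ) :
    (m.choose x : K) / ((m + d).choose x : K) ≤ (1 - (x : K) / ((m : K) + d)) ^ d := by
  have factor_nonneg (i : ℕ) : 0 ≤ 1 - (x : K) / ((m : K) + i + 1) := by
    exact_mod_cast one_sub_natCast_div_natCast_nonneg (K := K) (by omega : x ≤ m + i + 1)
  calc (m.choose x : K) / ((m + d).choose x : K)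
      = ∏ i ∈ Finset.range d, (1 - (x : K) / ((m : K) + i + 1)) :=
        choose_div_choose_add_eq_prod hx d
    _ ≤ ∏ _i ∈ Finset.range d, (1 - (x : K) / ((m : K) + d)) := by
        refine Finset.prod_le_prod (fun i _ ↦ factor_nonneg i) fun i hi ↦ ?_
        have hid : (i : K) + 1 ≤ d := by exact_mod_cast Finset.mem_range.1 hi
        rw [add_assoc (m : K)]
        gcongr
    _ = (1 - (x : K) / ((m : K) + d)) ^ d := by rw [Finset.prod_const, Finset.card_range]

theorem one_sub_mul_div_le_choose_div_choose_add (hx : x ≤ m) (d : ℕ) :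
    1 - d * ((x : K) / ((m : K) + 1)) ≤ (m.choose x : K) / ((m + d).choose x : K) := by
  have first_nonneg : 0 ≤ 1 - (x : K) / ((m : K) + 1) := by
    exact_mod_cast one_sub_natCast_div_natCast_nonneg (K := K) (hx.trans m.le_succ)
  calc 1 - d * ((x : K) / ((m : K) + 1))
      = 1 + d * -((x : K) / ((m : K) + 1)) := by ring
    _ ≤ (1 + -((x : K) / ((m : K) + 1))) ^ d := one_add_mul_le_pow (by linarith) d
    _ = (1 - (x : K) / ((m : K) + 1)) ^ d := by rw [← sub_eq_add_neg]
    _ ≤ (m.choose x : K) / ((m + d).choose x : K) := one_sub_div_pow_le_choose_div_choose_add hx d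

theorem choose_div_choose_add_le_one (m x d : ℕ) :
    (m.choose x : K) / ((m + d).choose x : K) ≤ 1 :=
  div_le_one_of_le₀ (by exact_mod_cast Nat.choose_le_choose x (m.le_add_right d)) (by positivity)

end ChooseRatio

theorem choose_mul_choose_le_choose_add (m n a b : ℕ) :
    m.choose a * n.choose b ≤ (m + n).choose (a + b) := by
  rw [Nat.add_choose_eq]
  exact Finset.single_le_sum (f := fun ij : ℕ × ℕ ↦ m.choose ij.1 * n.choose ij.2)
    (fun _ _ ↦ Nat.zero_le _) (Finset.HasAntidiagonal.mem_antidiagonal (a := (a, b)).2 rfl)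

theorem hgProb_nonneg (k d c x₀ x₁ x₂ : ℕ) : 0 ≤ hgProb k d c x₀ x₁ x₂ := by
  unfold hgProb
  positivity

theorem hgProb_le_one {k d c x₀ x₁ x₂ : ℕ} (hd : d ≤ k) (hc : x₀ + x₁ + x₂ ≤ c) :
    hgProb k d c x₀ x₁ x₂ ≤ 1 := by
  refine div_le_one_of_le₀ ?_ (Nat.cast_nonneg _)
  have vandermonde : d.choose x₀ * (k - d).choose x₁ * (k - d).choose x₂ *
      d.choose (c - x₀ - x₁ - x₂) ≤ (2 * k).choose c :=
    calc d.choose x₀ * (k - d).choose x₁ * (k - d).choose x₂ * d.choose (c - x₀ - x₁ - x₂)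
        ≤ (d + (k - d)).choose (x₀ + x₁) * (k - d).choose x₂ * d.choose (c - x₀ - x₁ - x₂) := by
          gcongr
          exact choose_mul_choose_le_choose_add ..
      _ ≤ (d + (k - d) + (k - d)).choose (x₀ + x₁ + x₂) * d.choose (c - x₀ - x₁ - x₂) := by
          gcongr
          exact choose_mul_choose_le_choose_add ..
      _ ≤ (d + (k - d) + (k - d) + d).choose (x₀ + x₁ + x₂ + (c - x₀ - x₁ - x₂)) :=
          choose_mul_choose_le_choose_add ..
      _ = (2 * k).choose c := by congr 1 <;> omega
  exact_mod_cast vandermonde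

theorem hgProb_eq_ratio_mul_hgProb_zero {m d x₁ x₂ : ℕ} (hx₁ : x₁ ≤ m + d) (hx₂ : x₂ ≤ m + d) :
    hgProb (m + d) d (x₁ + x₂) 0 x₁ x₂ =
      (m.choose x₁ : ℝ) / ((m + d).choose x₁ : ℝ) * ((m.choose x₂ : ℝ) / ((m + d).choose x₂ : ℝ)) *
        hgProb (m + d) 0 (x₁ + x₂) 0 x₁ x₂ := by
  have hC₁ : ((m + d).choose x₁ : ℝ) ≠ 0 := Nat.cast_ne_zero.2 (Nat.choose_pos hx₁).ne'
  have hC₂ : ((m + d).choose x₂ : ℝ) ≠ 0 := Nat.cast_ne_zero.2 (Nat.choose_pos hx₂).ne'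
  simp only [hgProb, Nat.choose_zero_right, Nat.cast_one, one_mul, Nat.sub_zero,
    Nat.add_sub_cancel, Nat.add_sub_cancel_left, Nat.sub_self, mul_one]
  field_simp

theorem abs_hgProb_sub_hgProb_zero_le {m x₁ x₂ : ℕ} (hx₁ : x₁ ≤ m) (hx₂ : x₂ ≤ m) (d : ℕ) :
    |hgProb (m + d) d (x₁ + x₂) 0 x₁ x₂ - hgProb (m + d) 0 (x₁ + x₂) 0 x₁ x₂| ≤
      d * (x₁ + x₂) * ((m : ℝ) + 1)⁻¹ := by
  rw [hgProb_eq_ratio_mul_hgProb_zero (hx₁.trans (m.le_add_right d))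
    (hx₂.trans (m.le_add_right d))]
  have hr₁ := one_sub_mul_div_le_choose_div_choose_add (K := ℝ) hx₁ d
  have hr₂ := one_sub_mul_div_le_choose_div_choose_add (K := ℝ) hx₂ d
  have hr₁_one := choose_div_choose_add_le_one (K := ℝ) m x₁ d
  have hr₂_one := choose_div_choose_add_le_one (K := ℝ) m x₂ d
  have hr₂_nonneg : 0 ≤ (m.choose x₂ : ℝ) / ((m + d).choose x₂ : ℝ) := by positivity
  set r₁ := (m.choose x₁ : ℝ) / ((m + d).choose x₁ : ℝ)
  set r₂ := (m.choose x₂ : ℝ) / ((m + d).choose x₂ : ℝ)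
  have p_nonneg := hgProb_nonneg (m + d) 0 (x₁ + x₂) 0 x₁ x₂
  have p_le_one : hgProb (m + d) 0 (x₁ + x₂) 0 x₁ x₂ ≤ 1 :=
    hgProb_le_one (m + d).zero_le (by rw [Nat.zero_add])
  set p := hgProb (m + d) 0 (x₁ + x₂) 0 x₁ x₂
  have ratio_le_one : r₁ * r₂ ≤ 1 := mul_le_one₀ hr₁_one hr₂_nonneg hr₂_one
  calc |r₁ * r₂ * p - p|
      = (1 - r₁ * r₂) * p := by
        rw [abs_sub_comm, ← one_sub_mul,
          abs_of_nonneg (mul_nonneg (sub_nonneg.2 ratio_le_one) p_nonneg)]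
    _ ≤ 1 - r₁ * r₂ := mul_le_of_le_one_right (sub_nonneg.2 ratio_le_one) p_le_one
    _ ≤ (1 - r₁) + (1 - r₂) := by
        linarith [mul_nonneg (sub_nonneg.2 hr₁_one) (sub_nonneg.2 hr₂_one)]
    _ ≤ d * (x₁ / ((m : ℝ) + 1)) + d * (x₂ / ((m : ℝ) + 1)) := by linarith
    _ = d * (x₁ + x₂) * ((m : ℝ) + 1)⁻¹ := by ring

theorem isBigO_inv_natCast_add_const (a : ℝ) :
    (fun k : ℕ ↦ ((k : ℝ) + a)⁻¹) =O[atTop] fun k : ℕ ↦ (1 : ℝ) / k := by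
  have const_isLittleO : (fun _ : ℕ ↦ a) =o[atTop] fun k : ℕ ↦ (k : ℝ) :=
    (isLittleO_const_id_atTop a).comp_tendsto tendsto_natCast_atTop_atTop
  simpa only [one_div, Pi.inv_def, Pi.add_def] using
    (IsEquivalent.refl.add_isLittleO const_isLittleO).inv.isBigO

theorem hgProb_sub_hgProb_zero_isBigO (d x₁ x₂ : ℕ) :
    (fun k : ℕ ↦ hgProb k d (x₁ + x₂) 0 x₁ x₂ - hgProb k 0 (x₁ + x₂) 0 x₁ x₂)
      =O[atTop] fun k : ℕ ↦ (1 : ℝ) / k := by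
  refine IsBigO.trans (.of_bound (d * (x₁ + x₂)) ?_) (isBigO_inv_natCast_add_const (1 - d))
  filter_upwards [eventually_ge_atTop (x₁ + x₂ + d)] with k hk
  obtain ⟨m, rfl⟩ : ∃ m, k = m + d := Nat.exists_eq_add_of_le' (by omega)
  have hm : ((m + d : ℕ) : ℝ) + (1 - d) = m + 1 := by push_cast; ring
  rw [hm, Real.norm_eq_abs, Real.norm_of_nonneg (by positivity : (0 : ℝ) ≤ (m + 1 : ℝ)⁻¹)]
  exact abs_hgProb_sub_hgProb_zero_le (by omega) (by omega) d

theorem hypergeometric_ratio_sandwich_and_difference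
    (d x₁ x₂ c : ℕ) (hc : x₁ + x₂ = c) :
    (∀ k : ℕ, 1 ≤ k → d ≤ k → x₁ ≤ k - d → x₂ ≤ k - d →
      (((k : ℝ) - d + 1 - x₁) / ((k : ℝ) - d + 1)) ^ d *
          (((k : ℝ) - d + 1 - x₂) / ((k : ℝ) - d + 1)) ^ d
        ≤ (((k - d).choose x₁ : ℝ) * ((k - d).choose x₂ : ℝ)) /
            ((k.choose x₁ : ℝ) * (k.choose x₂ : ℝ)) ∧
      (((k - d).choose x₁ : ℝ) * ((k - d).choose x₂ : ℝ)) /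
            ((k.choose x₁ : ℝ) * (k.choose x₂ : ℝ))
        ≤ (((k : ℝ) - x₁) / (k : ℝ)) ^ d * (((k : ℝ) - x₂) / (k : ℝ)) ^ d) ∧
    (fun k : ℕ => hgProb k d c 0 x₁ x₂ - hgProb k 0 c 0 x₁ x₂)
      =O[atTop] fun k : ℕ => (1 : ℝ) / (k : ℝ) := by
  subst hc
  refine ⟨fun k hk hd hx₁ hx₂ ↦ ?_, hgProb_sub_hgProb_zero_isBigO d x₁ x₂⟩
  obtain ⟨m, rfl⟩ : ∃ m, k = m + d := Nat.exists_eq_add_of_le' hd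
  rw [Nat.add_sub_cancel] at hx₁ hx₂ ⊢
  have hk₀ : (m : ℝ) + d ≠ 0 := by exact_mod_cast (by omega : m + d ≠ 0)
  have hm₀ : (m : ℝ) + 1 ≠ 0 := m.cast_add_one_ne_zero
  have lower (x : ℕ) (hx : x ≤ m) := one_sub_div_pow_le_choose_div_choose_add (K := ℝ) hx d
  have upper (x : ℕ) (hx : x ≤ m) := choose_div_choose_add_le_one_sub_div_pow (K := ℝ) hx d
  rw [Nat.cast_add, add_sub_cancel_right, mul_div_mul_comm, ← one_sub_div hm₀, ← one_sub_div hm₀,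
    ← one_sub_div hk₀, ← one_sub_div hk₀]
  have lower_nonneg : 0 ≤ 1 - (x₂ : ℝ) / ((m : ℝ) + 1) := by
    exact_mod_cast one_sub_natCast_div_natCast_nonneg (K := ℝ) (hx₂.trans m.le_succ)
  exact ⟨mul_le_mul (lower x₁ hx₁) (lower x₂ hx₂) (pow_nonneg lower_nonneg d) (by positivity),
    mul_le_mul (upper x₁ hx₁) (upper x₂ hx₂) (by positivity)
      (le_trans (by positivity) (upper x₁ hx₁))⟩

end
end

section
/- Let k ≥ 1 and let x_1,…,x_{2k} be real numbers, and define the order-k linear average kernel g(S) = k^{-1} ∑_{i∈S} x_i for k-element subsets S of {1,…,2k}. Then for every 0 ≤ d ≤ k, φ_d − φ_0 = (d/k²) · ( (1/(2k)) ∑_{i=1}^{2k} x_i² − (2/(2k(2k−1))) ∑_{1≤i<j≤2k} x_i x_j ), where φ_d is computed from g over the full set {1,…,2k}. -/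
/-!
Statement 15: for the order-`k` linear average kernel `g(S) = k⁻¹ ∑_{i∈S} xᵢ`
on `k`-element subsets of `{1,…,2k}`, for every `0 ≤ d ≤ k`,
`φ_d - φ_0 = (d/k²) ((1/(2k)) ∑ xᵢ² - (2/(2k(2k-1))) ∑_{i<j} xᵢ xⱼ)`.
-/

open Finset

noncomputable section

/-- `φ_d` computed from a function `g` on `k`-subsets of `{1,…,2k}`. -/
def phiLin (k : ℕ) (g : Finset (Fin (2 * k)) → ℝ) (d : ℕ) : ℝ :=
  (Mdk k d : ℝ)⁻¹ *
    ∑ S₁ ∈ Finset.powersetCard k (Finset.univ : Finset (Fin (2 * k))),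
      ∑ S₂ ∈ Finset.powersetCard k (Finset.univ : Finset (Fin (2 * k))),
        if (S₁ ∩ S₂).card = d then g S₁ * g S₂ else 0

/-!
The set of pairs `(S, T)` with `#S = k`, `#T = l`, `#(S ∩ T) = d` is stable under the diagonal
action of the symmetric group, so averages over it do not change when each pair `(S, T)` is replaced
by a uniformly random translate `(σ S, σ T)`. For a fixed pair, `S × T` has `d` diagonal and
`k l - d` off-diagonal points, and a random `σ` makes each of them uniform on the diagonal,
respectively off the diagonal. Hence `𝔼 (∑ i ∈ S, x i) (∑ j ∈ T, y j) = d q + (k l - d) r`, where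
`q` and `r` are the means of `x i * y j` over the diagonal and off it, and subtracting two such
averages leaves a multiple of `q - r`.
-/

open scoped BigOperators Pointwise

section GroupAverage

variable {G X E : Type*} [Group G] [Fintype G] [MulAction G X] [AddCommMonoid E] [Module ℚ≥0 E]
  {s : Finset X}

lemma expect_expect_smul (hs : ∀ g : G, ∀ a ∈ s, g • a ∈ s) (f : X → E) :
    𝔼 a ∈ s, 𝔼 g : G, f (g • a) = 𝔼 a ∈ s, f a := by
  have translate (g : G) : 𝔼 a ∈ s, f (g • a) = 𝔼 a ∈ s, f a :=
    expect_nbij' (g • ·) (g⁻¹ • ·) (hs g) (hs g⁻¹) (fun _ _ ↦ inv_smul_smul g _)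
      (fun _ _ ↦ smul_inv_smul g _) (fun _ _ ↦ rfl)
  rw [expect_comm]
  simp_rw [translate]
  exact Fintype.expect_const _

lemma expect_smul_eq_expect_of_coe_eq_orbit {a : X} (hs : (s : Set X) = MulAction.orbit G a)
    (f : X → E) : 𝔼 g : G, f (g • a) = 𝔼 b ∈ s, f b := by
  have mem_iff (b : X) : b ∈ s ↔ b ∈ MulAction.orbit G a := by rw [← hs, mem_coe]
  have average_eq : ∀ b ∈ s, 𝔼 g : G, f (g • b) = 𝔼 g : G, f (g • a) := by
    intro b hb
    obtain ⟨h, rfl⟩ := (mem_iff b).1 hb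
    exact Fintype.expect_equiv (Equiv.mulRight h) _ _ fun g ↦ by
      rw [Equiv.coe_mulRight, mul_smul]
  have stable (g : G) (b : X) (hb : b ∈ s) : g • b ∈ s :=
    (mem_iff _).2 (MulAction.mem_orbit_of_mem_orbit g ((mem_iff b).1 hb))
  have nonempty : s.Nonempty := ⟨a, (mem_iff a).2 (MulAction.mem_orbit_self a)⟩
  rw [← expect_expect_smul stable, expect_congr rfl average_eq, expect_const nonempty]

end GroupAverage

section Product

variable {α : Type*} [DecidableEq α]

lemma card_filter_fst_eq_snd_product (S T : Finset α) :
    #{p ∈ S ×ˢ T | p.1 = p.2} = #(S ∩ T) := by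
  rw [← diag_card (S ∩ T)]
  refine congrArg card (Finset.ext fun p ↦ ?_)
  grind

lemma card_filter_fst_ne_snd_product (S T : Finset α) :
    #{p ∈ S ×ˢ T | p.1 ≠ p.2} = #S * #T - #(S ∩ T) := by
  rw [← card_product, ← card_filter_add_card_filter_not (s := S ×ˢ T) (fun p ↦ p.1 = p.2),
    card_filter_fst_eq_snd_product, Nat.add_sub_cancel_left]

end Product

section OffDiag

lemma sum_offDiag_eq_two_nsmul_sum_lt {ι M : Type*} [Fintype ι] [LinearOrder ι] [AddCommMonoid M]
    {f : ι → ι → M} (hf : ∀ i j, f i j = f j i) :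
    ∑ p ∈ univ.offDiag, f p.1 p.2 = 2 • ∑ i, ∑ j, if i < j then f i j else 0 := by
  have split (i j : ι) : (if i ≠ j then f i j else 0) =
      (if i < j then f i j else 0) + if j < i then f j i else 0 := by
    rcases lt_trichotomy i j with h | rfl | h
    · simp [h, h.ne, h.not_gt]
    · simp
    · simp [h, h.ne', h.not_gt, hf i j]
  have offDiag_eq : (univ : Finset ι).offDiag = ({p | p.1 ≠ p.2} : Finset (ι × ι)) := by grind
  rw [offDiag_eq, sum_filter, Fintype.sum_prod_type]
  simp_rw [split, sum_add_distrib]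
  rw [two_nsmul, sum_comm (f := fun i j ↦ if j < i then f j i else 0)]

lemma expect_offDiag_mul_eq_sum_lt {ι K : Type*} [Fintype ι] [LinearOrder ι] [Field K] [CharZero K]
    (x : ι → K) :
    𝔼 p ∈ univ.offDiag, x p.1 * x p.2 =
      2 / (Fintype.card ι * (Fintype.card ι - 1)) * ∑ i, ∑ j, if i < j then x i * x j else 0 := by
  rw [expect_eq_sum_div_card, sum_offDiag_eq_two_nsmul_sum_lt fun i j ↦ mul_comm (x i) (x j),
    offDiag_card, card_univ, Nat.cast_sub (Nat.le_mul_self _), nsmul_eq_mul]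
  push_cast
  ring

end OffDiag

section PermAverage

variable {α : Type*} [Fintype α]

lemma coe_diag_univ_eq_orbit_perm (i : α) :
    ((univ : Finset α).diag : Set (α × α)) = MulAction.orbit (Equiv.Perm α) (i, i) := by
  ext ⟨a, b⟩
  simp only [mem_coe, mem_diag, mem_univ, true_and, MulAction.mem_orbit_iff, Prod.smul_mk,
    Prod.mk.injEq]
  constructor
  · rintro rfl
    obtain ⟨σ, hσ⟩ := MulAction.exists_smul_eq (Equiv.Perm α) i a
    exact ⟨σ, hσ, hσ⟩
  · rintro ⟨σ, rfl, rfl⟩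
    rfl

lemma coe_offDiag_univ_eq_orbit_perm {i j : α} (hij : i ≠ j) :
    ((univ : Finset α).offDiag : Set (α × α)) = MulAction.orbit (Equiv.Perm α) (i, j) := by
  ext ⟨a, b⟩
  simp only [mem_coe, mem_offDiag, mem_univ, true_and, MulAction.mem_orbit_iff, Prod.smul_mk,
    Prod.mk.injEq]
  constructor
  · exact MulAction.is_two_pretransitive_iff.1 (Equiv.Perm.isMultiplyPretransitive α 2) hij
  · rintro ⟨σ, rfl, rfl⟩
    exact σ.injective.ne hij

variable [DecidableEq α] {E : Type*} [AddCommMonoid E] [Module ℚ≥0 E]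

lemma expect_perm_sum_smul_product (S T : Finset α) (f : α × α → E) :
    𝔼 σ : Equiv.Perm α, ∑ p ∈ (σ • S) ×ˢ (σ • T), f p =
      #(S ∩ T) • 𝔼 p ∈ univ.diag, f p + (#S * #T - #(S ∩ T)) • 𝔼 p ∈ univ.offDiag, f p := by
  have sum_smul (σ : Equiv.Perm α) :
      ∑ p ∈ (σ • S) ×ˢ (σ • T), f p = ∑ p ∈ S ×ˢ T, f (σ • p) := by
    simp only [smul_finset_def, sum_product, sum_image (MulAction.injective σ).injOn, Prod.smul_def]
  have diag_average : ∀ p ∈ (S ×ˢ T).filter fun p ↦ p.1 = p.2,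
      𝔼 σ : Equiv.Perm α, f (σ • p) = 𝔼 q ∈ univ.diag, f q := by
    rintro ⟨i, j⟩ hp
    obtain rfl : i = j := (mem_filter.1 hp).2
    exact expect_smul_eq_expect_of_coe_eq_orbit (coe_diag_univ_eq_orbit_perm i) f
  have offDiag_average : ∀ p ∈ (S ×ˢ T).filter fun p ↦ p.1 ≠ p.2,
      𝔼 σ : Equiv.Perm α, f (σ • p) = 𝔼 q ∈ univ.offDiag, f q := fun p hp ↦
    expect_smul_eq_expect_of_coe_eq_orbit (coe_offDiag_univ_eq_orbit_perm (mem_filter.1 hp).2) f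
  simp_rw [sum_smul]
  rw [expect_sum_comm, ← sum_filter_add_sum_filter_not _ (fun p ↦ p.1 = p.2),
    sum_congr rfl diag_average, sum_congr rfl offDiag_average, sum_const, sum_const,
    card_filter_fst_eq_snd_product, card_filter_fst_ne_snd_product]

end PermAverage

section IntersectingPairs

variable {α : Type*} [DecidableEq α]

lemma card_filter_powersetCard_card_inter_eq {s u : Finset α} (hsu : s ⊆ u) {n d : ℕ}
    (hd : d ≤ n) :
    #{t ∈ u.powersetCard n | #(s ∩ t) = d} = (#s).choose d * (#(u \ s)).choose (n - d) := by
  rw [← card_powersetCard, ← card_powersetCard, ← card_product]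
  refine card_nbij' (fun t ↦ (s ∩ t, t \ s)) (fun q ↦ q.1 ∪ q.2) ?_ ?_ ?_ ?_
  · intro t ht
    have := card_inter_add_card_sdiff t s
    grind
  · rintro ⟨a, b⟩ hab
    have inter_eq : s ∩ (a ∪ b) = a := by grind
    have disjoint : Disjoint a b := by grind [disjoint_left]
    have := card_union_of_disjoint disjoint
    grind
  · intro t _
    grind
  · rintro ⟨a, b⟩ hab
    have fst_eq : s ∩ (a ∪ b) = a := by grind
    have snd_eq : (a ∪ b) \ s = b := by grind
    exact Prod.ext fst_eq snd_eq

variable [Fintype α]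

variable (α) in
/-- The ordered pairs of subsets of `α` of sizes `k` and `l` whose intersection has size `d`: the
index set of the average `φ_d`, for which `k = l` and `α` has `2k` elements. -/
def intersectingPairs (k l d : ℕ) : Finset (Finset α × Finset α) :=
  {p | #p.1 = k ∧ #p.2 = l ∧ #(p.1 ∩ p.2) = d}

variable {k l d : ℕ}

lemma mem_intersectingPairs {p : Finset α × Finset α} :
    p ∈ intersectingPairs α k l d ↔ #p.1 = k ∧ #p.2 = l ∧ #(p.1 ∩ p.2) = d := by
  simp only [intersectingPairs, mem_filter, mem_univ, true_and]

lemma intersectingPairs_eq_filter_product :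
    intersectingPairs α k l d =
      {p ∈ (univ : Finset α).powersetCard k ×ˢ (univ : Finset α).powersetCard l |
        #(p.1 ∩ p.2) = d} := by
  ext p
  simp only [mem_intersectingPairs, mem_filter, mem_product, mem_powersetCard_univ, and_assoc]

lemma card_intersectingPairs (hd : d ≤ l) :
    #(intersectingPairs α k l d) =
      (Fintype.card α).choose k * (k.choose d * (Fintype.card α - k).choose (l - d)) := by
  have fiber : ∀ S ∈ univ.powersetCard k, #{T ∈ (univ : Finset α).powersetCard l | #(S ∩ T) = d} =
      k.choose d * (Fintype.card α - k).choose (l - d) := by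
    intro S hS
    rw [card_filter_powersetCard_card_inter_eq (subset_univ S) hd, ← compl_eq_univ_sdiff,
      card_compl, mem_powersetCard_univ.1 hS]
  rw [intersectingPairs_eq_filter_product, card_filter, sum_product]
  simp_rw [← card_filter]
  rw [sum_const_nat fiber, card_powersetCard, card_univ]

lemma smul_mem_intersectingPairs (σ : Equiv.Perm α) :
    ∀ p ∈ intersectingPairs α k l d, σ • p ∈ intersectingPairs α k l d := by
  intro p hp
  simpa only [mem_intersectingPairs, Prod.smul_fst, Prod.smul_snd, ← smul_finset_inter,
    card_smul_finset] using hp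

lemma expect_intersectingPairs_sum_product {E : Type*} [AddCommMonoid E] [Module ℚ≥0 E]
    (hP : (intersectingPairs α k l d).Nonempty) (f : α × α → E) :
    𝔼 p ∈ intersectingPairs α k l d, ∑ q ∈ p.1 ×ˢ p.2, f q =
      d • 𝔼 q ∈ univ.diag, f q + (k * l - d) • 𝔼 q ∈ univ.offDiag, f q := by
  rw [← expect_expect_smul smul_mem_intersectingPairs, ← expect_const hP (d • _ + _)]
  refine expect_congr rfl fun p hp ↦ ?_
  obtain ⟨card_fst, card_snd, card_inter⟩ := mem_intersectingPairs.1 hp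
  simp only [Prod.smul_fst, Prod.smul_snd, expect_perm_sum_smul_product, card_fst, card_snd,
    card_inter]

lemma le_mul_of_intersectingPairs_nonempty (hP : (intersectingPairs α k l d).Nonempty) :
    d ≤ k * l := by
  obtain ⟨p, hp⟩ := hP
  obtain ⟨rfl, rfl, rfl⟩ := mem_intersectingPairs.1 hp
  rw [← card_filter_fst_eq_snd_product, ← card_product]
  exact card_filter_le _ _

end IntersectingPairs

section PhiLin

variable {k d : ℕ}

lemma Mdk_eq_choose_mul (hd : d ≤ k) :
    Mdk k d = (2 * k).choose k * (k.choose d * k.choose (k - d)) := by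
  have choose_eq : (2 * k - d).choose (k - d) = (2 * k - d).choose k :=
    Nat.choose_symm_of_eq_add (by lia)
  have sub_eq : 2 * k - d - d = 2 * k - 2 * d := by lia
  calc Mdk k d
      = (2 * k).choose d * ((2 * k - d).choose d * (2 * k - d - d).choose (k - d)) := by
        rw [Mdk, sub_eq, mul_assoc]
    _ = (2 * k).choose d * (2 * k - d).choose (k - d) * k.choose d := by
        rw [← Nat.choose_mul hd, choose_eq, mul_assoc]
    _ = (2 * k).choose k * (k.choose d * k.choose (k - d)) := by
        rw [← Nat.choose_mul hd, Nat.choose_symm hd, mul_assoc]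

lemma card_intersectingPairs_eq_Mdk (hd : d ≤ k) :
    #(intersectingPairs (Fin (2 * k)) k k d) = Mdk k d := by
  rw [card_intersectingPairs hd, Mdk_eq_choose_mul hd, Fintype.card_fin, two_mul,
    Nat.add_sub_cancel_left]

lemma intersectingPairs_nonempty (hd : d ≤ k) :
    (intersectingPairs (Fin (2 * k)) k k d).Nonempty := by
  rw [← card_pos, card_intersectingPairs_eq_Mdk hd, Mdk_eq_choose_mul hd]
  have := Nat.choose_pos (show k ≤ 2 * k by lia)
  have := Nat.choose_pos hd
  have := Nat.choose_pos (Nat.sub_le k d)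
  positivity

lemma phiLin_eq_expect (hd : d ≤ k) (g : Finset (Fin (2 * k)) → ℝ) :
    phiLin k g d = 𝔼 p ∈ intersectingPairs (Fin (2 * k)) k k d, g p.1 * g p.2 := by
  rw [expect_eq_sum_div_card, card_intersectingPairs_eq_Mdk hd, div_eq_inv_mul, phiLin,
    intersectingPairs_eq_filter_product, sum_filter, sum_product]

lemma phiLin_const_mul (c : ℝ) (g : Finset (Fin (2 * k)) → ℝ) :
    phiLin k (fun S ↦ c * g S) d = c ^ 2 * phiLin k g d := by
  simp only [phiLin, mul_sum, mul_ite, mul_zero]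
  refine sum_congr rfl fun S₁ _ ↦ sum_congr rfl fun S₂ _ ↦ if_congr Iff.rfl ?_ rfl
  ring

end PhiLin

theorem linear_kernel_phi_difference_general {α R : Type*} [Fintype α] [DecidableEq α] [Ring R]
    [Module ℚ≥0 R] {k l d e : ℕ} (hd : (intersectingPairs α k l d).Nonempty)
    (he : (intersectingPairs α k l e).Nonempty) (x y : α → R) :
    𝔼 p ∈ intersectingPairs α k l d, (∑ i ∈ p.1, x i) * ∑ j ∈ p.2, y j -
        𝔼 p ∈ intersectingPairs α k l e, (∑ i ∈ p.1, x i) * ∑ j ∈ p.2, y j =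
      (d - e) * (𝔼 i, x i * y i - 𝔼 p ∈ univ.offDiag, x p.1 * y p.2) := by
  have expect_diag : 𝔼 q ∈ univ.diag, x q.1 * y q.2 = 𝔼 i, x i * y i := by
    simp only [expect, sum_diag, diag_card]
  simp only [sum_mul_sum, ← sum_product', expect_intersectingPairs_sum_product hd,
    expect_intersectingPairs_sum_product he, expect_diag, nsmul_eq_mul,
    Nat.cast_sub (le_mul_of_intersectingPairs_nonempty hd),
    Nat.cast_sub (le_mul_of_intersectingPairs_nonempty he)]
  noncomm_ring

theorem linear_kernel_phi_difference (k : ℕ) (hk : 1 ≤ k) (x : Fin (2 * k) → ℝ) :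
    ∀ d, d ≤ k →
      phiLin k (fun S => (k : ℝ)⁻¹ * ∑ i ∈ S, x i) d
          - phiLin k (fun S => (k : ℝ)⁻¹ * ∑ i ∈ S, x i) 0
        = ((d : ℝ) / (k : ℝ) ^ 2) *
            ((1 / (2 * (k : ℝ))) * ∑ i : Fin (2 * k), x i ^ 2
              - (2 / ((2 * (k : ℝ)) * (2 * (k : ℝ) - 1))) *
                  ∑ i : Fin (2 * k), ∑ j : Fin (2 * k),
                    if i < j then x i * x j else 0) := by
  intro d hd
  rw [phiLin_const_mul, phiLin_const_mul, phiLin_eq_expect hd, phiLin_eq_expect k.zero_le,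
    ← mul_sub, linear_kernel_phi_difference_general (intersectingPairs_nonempty hd)
      (intersectingPairs_nonempty k.zero_le),
    Fintype.expect_eq_sum_div_card, expect_offDiag_mul_eq_sum_lt, Fintype.card_fin]
  simp only [← sq]
  push_cast
  ring

end
end

section
/- Let k ≥ 1, M ≥ 2 and n ≥ Mk be integers, let h be any real-valued function on k-element subsets of {1,…,n}, and let U_n = C(n,k)^{-1} ∑_S h(S). Let G be the collection of all ordered M-tuples of pairwise disjoint k-element subsets of {1,…,n}. Then the deterministic identities V̂^(h) = σ_WP² and V̂^(h) − V̂^(S) = σ_WP²/M − σ_BP² hold; in particular, the proposed complete variance estimator coincides with the partition-based estimator of Wang and Lindsay (2014). -/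
/-!
Statement 19: for any real-valued function `h` on `k`-element subsets of
`{1,…,n}`, the deterministic identities `V̂^(h) = σ_WP²` and
`V̂^(h) - V̂^(S) = σ_WP²/M - σ_BP²` hold, i.e. the proposed complete variance
estimator coincides with the partition-based estimator of Wang–Lindsay (2014).
-/

open Finset

noncomputable section

/-- The complete U-statistic value. -/
def UstatD (n k : ℕ) (h : Finset (Fin n) → ℝ) : ℝ :=
  (n.choose k : ℝ)⁻¹ * ∑ S ∈ Finset.powersetCard k (Finset.univ : Finset (Fin n)), h S

/-- The sample-variance part `V̂^(S)`. -/
def VSD (n k : ℕ) (h : Finset (Fin n) → ℝ) : ℝ :=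
  (n.choose k : ℝ)⁻¹ *
    ∑ S ∈ Finset.powersetCard k (Finset.univ : Finset (Fin n)), (h S - UstatD n k h) ^ 2

/-- The tree-variance part `V̂^(h)` (over ordered pairs of disjoint `k`-subsets). -/
def VHD (n k : ℕ) (h : Finset (Fin n) → ℝ) : ℝ :=
  ((n.choose k : ℝ) * ((n - k).choose k : ℝ))⁻¹ *
    ∑ S₁ ∈ Finset.powersetCard k (Finset.univ : Finset (Fin n)),
      ∑ S₂ ∈ Finset.powersetCard k (Finset.univ : Finset (Fin n)),
        if S₁ ∩ S₂ = ∅ then (h S₁ - h S₂) ^ 2 / 2 else 0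

/-- The collection of matched groups: ordered `M`-tuples of pairwise disjoint
`k`-element subsets of `{1,…,n}`. -/
def groupSet (n k M : ℕ) : Finset (Fin M → Finset (Fin n)) :=
  Finset.univ.filter fun b => (∀ i, (b i).card = k) ∧ ∀ i j, i ≠ j → Disjoint (b i) (b j)

/-- The within-group mean `h̄^b`. -/
def groupMeanD (n k M : ℕ) (h : Finset (Fin n) → ℝ) (b : Fin M → Finset (Fin n)) : ℝ :=
  (M : ℝ)⁻¹ * ∑ i : Fin M, h (b i)

/-- The within-group variance `σ_WP²`. -/
def sigmaWP (n k M : ℕ) (h : Finset (Fin n) → ℝ) : ℝ :=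
  ((groupSet n k M).card : ℝ)⁻¹ *
    ∑ b ∈ groupSet n k M,
      ((M : ℝ) - 1)⁻¹ * ∑ i : Fin M, (h (b i) - groupMeanD n k M h b) ^ 2

/-- The between-group variance `σ_BP²`. -/
def sigmaBP (n k M : ℕ) (h : Finset (Fin n) → ℝ) : ℝ :=
  ((groupSet n k M).card : ℝ)⁻¹ *
    ∑ b ∈ groupSet n k M, (groupMeanD n k M h b - UstatD n k h) ^ 2

/-!
All the averages are expectations over one uniformly random permutation `σ`: fixing a matched group
`b`, the tuple `σ • b`, a pair of its entries and a single entry are uniformly distributed over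
matched groups, disjoint pairs and `k`-subsets respectively. The unbiased sample variance is the
mean of `(x i - x j) ^ 2 / 2` over pairs `i ≠ j`, so averaging it over matched groups gives
`V̂^(h)`. Averaging the parallel-axis identity of each group about `U_n` gives
`V̂^(S) = σ_BP² + (1 - 1 / M) σ_WP²`, which is the second identity.
-/

open Equiv Function MulAction
open scoped BigOperators Pointwise

section SampleVariance

variable {ι K : Type*} [Field K] [CharZero K]

theorem sum_sub_sq_eq_sum_sub_expect_sq_add (s : Finset ι) (x : ι → K) (u : K) :
    ∑ i ∈ s, (x i - u) ^ 2 =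
      ∑ i ∈ s, (x i - 𝔼 j ∈ s, x j) ^ 2 + #s * (𝔼 j ∈ s, x j - u) ^ 2 := by
  set m := 𝔼 j ∈ s, x j with hm
  have sum_deviation : ∑ i ∈ s, (x i - m) = 0 := by
    rw [sum_sub_distrib, sum_const, nsmul_eq_mul, hm, card_mul_expect, sub_self]
  calc ∑ i ∈ s, (x i - u) ^ 2
      = ∑ i ∈ s, ((x i - m) ^ 2 + 2 * (m - u) * (x i - m) + (m - u) ^ 2) :=
        sum_congr rfl fun i _ ↦ by ring
    _ = ∑ i ∈ s, (x i - m) ^ 2 + #s * (m - u) ^ 2 := by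
        simp only [sum_add_distrib, ← mul_sum, sum_deviation, mul_zero, add_zero, sum_const,
          nsmul_eq_mul]

theorem sum_sum_sub_sq (s : Finset ι) (x : ι → K) :
    ∑ i ∈ s, ∑ j ∈ s, (x i - x j) ^ 2 = 2 * #s * ∑ i ∈ s, (x i - 𝔼 j ∈ s, x j) ^ 2 := by
  rw [sum_comm]
  simp_rw [sum_sub_sq_eq_sum_sub_expect_sq_add s x (x _), sum_add_distrib, sum_const,
    nsmul_eq_mul, ← mul_sum, sub_sq_comm (𝔼 j ∈ s, x j)]
  ring

theorem expect_offDiag_sub_sq_div_two (s : Finset ι) (x : ι → K) :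
    𝔼 p ∈ s.offDiag, (x p.1 - x p.2) ^ 2 / 2 =
      ((#s : K) - 1)⁻¹ * ∑ i ∈ s, (x i - 𝔼 j ∈ s, x j) ^ 2 := by
  have sum_offDiag : ∑ p ∈ s.offDiag, (x p.1 - x p.2) ^ 2 =
      2 * #s * ∑ i ∈ s, (x i - 𝔼 j ∈ s, x j) ^ 2 := by
    classical
    rw [← sum_sum_sub_sq, ← sum_product', ← diag_union_offDiag,
      sum_union (disjoint_diag_offDiag s), sum_diag]
    simp
  have card_offDiag_cast : (#s.offDiag : K) = #s * (#s - 1) := by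
    rw [offDiag_card, Nat.cast_sub (Nat.le_mul_self _)]
    push_cast
    ring
  rw [← expect_div, expect_eq_sum_div_card, sum_offDiag, card_offDiag_cast]
  rcases s.eq_empty_or_nonempty with rfl | hs
  · simp
  · have : (#s : K) ≠ 0 := Nat.cast_ne_zero.mpr hs.card_ne_zero
    field_simp

end SampleVariance

section OrbitAverage

variable {G X Y E : Type*} [Group G] [MulAction G X] [MulAction G Y] [AddCommMonoid E]
  [Module ℚ≥0 E]

theorem expect_eq_expect_smul_of_coe_eq_orbit [Fintype G] {s : Finset X} {x : X}
    (hs : (s : Set X) = orbit G x) (f : X → E) :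
    𝔼 y ∈ s, f y = 𝔼 g : G, f (g • x) := by
  have mem_iff (y : X) : y ∈ s ↔ y ∈ orbit G x := by rw [← hs, mem_coe]
  have expect_smul (g : G) : 𝔼 y ∈ s, f (g • y) = 𝔼 y ∈ s, f y :=
    expect_equiv (toPerm g) (fun y ↦ by simp [mem_iff, mem_orbit_symm (a₂ := x)]) fun _ _ ↦ rfl
  have expect_translate (y : X) (hy : y ∈ s) : 𝔼 g : G, f (g • y) = 𝔼 g : G, f (g • x) := by
    obtain ⟨a, rfl⟩ := (mem_iff y).mp hy
    exact Fintype.expect_equiv (Equiv.mulRight a) _ _ fun g ↦ by simp [mul_smul]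
  calc 𝔼 y ∈ s, f y
      = 𝔼 g : G, 𝔼 y ∈ s, f (g • y) := by simp only [expect_smul, Fintype.expect_const]
    _ = 𝔼 y ∈ s, 𝔼 g : G, f (g • y) := expect_comm ..
    _ = 𝔼 _y ∈ s, 𝔼 g : G, f (g • x) := expect_congr rfl expect_translate
    _ = 𝔼 g : G, f (g • x) := expect_const ⟨x, (mem_iff x).mpr (mem_orbit_self x)⟩ _

theorem expect_comp_of_coe_eq_orbit [Finite G] {s : Finset X} {t : Finset Y} {x : X} (φ : X →[G] Y)
    (hs : (s : Set X) = orbit G x) (ht : (t : Set Y) = orbit G (φ x)) (f : Y → E) :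
    𝔼 y ∈ s, f (φ y) = 𝔼 z ∈ t, f z := by
  have := Fintype.ofFinite G
  simp only [expect_eq_expect_smul_of_coe_eq_orbit hs, expect_eq_expect_smul_of_coe_eq_orbit ht,
    map_smul]

end OrbitAverage

section DisjointFamilies

variable {α : Type*} [DecidableEq α]

theorem disjoint_smul_finset {G : Type*} [Group G] [MulAction G α] {g : G} {s t : Finset α} :
    Disjoint (g • s) (g • t) ↔ Disjoint s t :=
  disjoint_image (MulAction.injective g)

theorem exists_perm_smul_eq_of_pairwise_disjoint {ι : Type*} [Finite ι] {b c : ι → Finset α}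
    (hcard : ∀ i, #(b i) = #(c i)) (hb : Pairwise (Disjoint on b))
    (hc : Pairwise (Disjoint on c)) : ∃ σ : Perm α, σ • b = c := by
  have sigma_val_injective {d : ι → Finset α} (hd : Pairwise (Disjoint on d)) :
      Injective fun p : Σ i, d i ↦ (p.2 : α) := by
    rintro ⟨i, x⟩ ⟨j, y⟩ (hxy : (x : α) = y)
    obtain rfl : i = j := by
      by_contra hij
      exact disjoint_left.mp (hd hij) x.2 (by rw [hxy]; exact y.2)
    rw [Subtype.ext hxy]
  let e : (Σ i, b i) ≃ Σ i, c i := Equiv.sigmaCongrRight fun i ↦ equivOfCardEq (hcard i)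
  obtain ⟨σ, hσ⟩ := Perm.exists_extending_pair _ _ (sigma_val_injective hb)
    ((sigma_val_injective hc).comp e.injective)
  refine ⟨σ, funext fun i ↦ eq_of_subset_of_card_le ?_ ?_⟩
  · intro y hy
    obtain ⟨x, hx, rfl⟩ := mem_smul_finset.mp hy
    have := hσ ⟨i, x, hx⟩
    simp only [Perm.smul_def, this]
    exact (e ⟨i, x, hx⟩).2.2
  · rw [Pi.smul_apply, card_smul_finset, hcard]

variable [Fintype α]

variable (α) in
/-- The ordered pairs of disjoint `k`-element subsets of `α`, over which `V̂^(h)` averages. -/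
def disjointPairs (k : ℕ) : Finset (Finset α × Finset α) :=
  {p ∈ powersetCard k univ ×ˢ powersetCard k univ | Disjoint p.1 p.2}

theorem mem_disjointPairs {k : ℕ} {p : Finset α × Finset α} :
    p ∈ disjointPairs α k ↔ (#p.1 = k ∧ #p.2 = k) ∧ Disjoint p.1 p.2 := by
  simp [disjointPairs]

theorem card_disjointPairs (k : ℕ) :
    #(disjointPairs α k) = (Fintype.card α).choose k * (Fintype.card α - k).choose k := by
  have disjoint_eq_powersetCard_compl (S : Finset α) :
      {T ∈ powersetCard k (univ : Finset α) | Disjoint S T} = powersetCard k Sᶜ := by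
    ext T
    simp [mem_powersetCard, subset_compl_iff_disjoint_left, and_comm]
  calc #(disjointPairs α k)
      = ∑ S ∈ powersetCard k (univ : Finset α), #(powersetCard k Sᶜ) := by
        simp only [disjointPairs, card_filter, sum_product, ← disjoint_eq_powersetCard_compl]
    _ = ∑ _S ∈ powersetCard k (univ : Finset α), (Fintype.card α - k).choose k :=
        sum_congr rfl fun S hS ↦ by rw [card_powersetCard, card_compl, (mem_powersetCard.mp hS).2]
    _ = (Fintype.card α).choose k * (Fintype.card α - k).choose k := by
        rw [sum_const, card_powersetCard, card_univ, smul_eq_mul]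

theorem coe_powersetCard_eq_orbit (S : Finset α) :
    (powersetCard #S (univ : Finset α) : Set (Finset α)) = orbit (Perm α) S := by
  ext T
  simp only [mem_coe, mem_powersetCard_univ]
  refine ⟨fun hT ↦ ?_, ?_⟩
  · obtain ⟨σ, hσ⟩ := Perm.exists_map_finset_eq S T hT.symm
    exact ⟨σ, by rw [← hσ, map_eq_image]; rfl⟩
  · rintro ⟨σ, rfl⟩
    exact card_smul_finset σ S

theorem coe_disjointPairs_eq_orbit {k : ℕ} {p : Finset α × Finset α}
    (hp : p ∈ disjointPairs α k) :
    (disjointPairs α k : Set (Finset α × Finset α)) = orbit (Perm α) p := by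
  have pairwise_disjoint {q : Finset α × Finset α} (hq : q ∈ disjointPairs α k) :
      Pairwise (Disjoint on ![q.1, q.2]) := by
    have := (mem_disjointPairs.mp hq).2
    simp [Pairwise, Fin.forall_fin_two, onFun, this, this.symm]
  obtain ⟨⟨hp₁, hp₂⟩, hdisj⟩ := mem_disjointPairs.mp hp
  ext q
  refine ⟨fun hq ↦ ?_, ?_⟩
  · obtain ⟨⟨hq₁, hq₂⟩, -⟩ := mem_disjointPairs.mp hq
    obtain ⟨σ, hσ⟩ := exists_perm_smul_eq_of_pairwise_disjoint
      (Fin.forall_fin_two.mpr ⟨hp₁.trans hq₁.symm, hp₂.trans hq₂.symm⟩)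
      (pairwise_disjoint hp) (pairwise_disjoint hq)
    exact ⟨σ, Prod.ext (congrFun hσ 0) (congrFun hσ 1)⟩
  · rintro ⟨σ, rfl⟩
    simp [mem_disjointPairs, hp₁, hp₂, hdisj, disjoint_smul_finset]

end DisjointFamilies

section MatchedGroups

variable {n k M : ℕ}

theorem mem_groupSet {b : Fin M → Finset (Fin n)} :
    b ∈ groupSet n k M ↔ (∀ i, #(b i) = k) ∧ Pairwise (Disjoint on b) := by
  simp [groupSet, Pairwise]

theorem groupSet_nonempty (hMk : M * k ≤ n) : (groupSet n k M).Nonempty := by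
  let e : Fin M × Fin k ↪ Fin n := finProdFinEquiv.toEmbedding.trans (Fin.castLEEmb hMk)
  refine ⟨fun i ↦ ({i} ×ˢ univ).map e, mem_groupSet.mpr ⟨fun i ↦ by simp, fun i j hij ↦ ?_⟩⟩
  exact (disjoint_map e).mpr (disjoint_product.mpr (.inl (disjoint_singleton.mpr hij)))

theorem coe_groupSet_eq_orbit {b : Fin M → Finset (Fin n)} (hb : b ∈ groupSet n k M) :
    (groupSet n k M : Set (Fin M → Finset (Fin n))) = orbit (Perm (Fin n)) b := by
  obtain ⟨hcard, hdisj⟩ := mem_groupSet.mp hb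
  ext c
  refine ⟨fun hc ↦ ?_, ?_⟩
  · obtain ⟨hcard', hdisj'⟩ := mem_groupSet.mp hc
    exact exists_perm_smul_eq_of_pairwise_disjoint (fun i ↦ (hcard i).trans (hcard' i).symm)
      hdisj hdisj'
  · rintro ⟨σ, rfl⟩
    exact mem_groupSet.mpr ⟨by simp [hcard], fun i j hij ↦ disjoint_smul_finset.mpr (hdisj hij)⟩

variable {E : Type*} [AddCommMonoid E] [Module ℚ≥0 E]

theorem expect_groupSet_apply (hG : (groupSet n k M).Nonempty) (i : Fin M)
    (f : Finset (Fin n) → E) :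
    𝔼 b ∈ groupSet n k M, f (b i) = 𝔼 S ∈ powersetCard k univ, f S := by
  obtain ⟨b, hb⟩ := hG
  obtain rfl := (mem_groupSet.mp hb).1 i
  let proj : (Fin M → Finset (Fin n)) →[Perm (Fin n)] Finset (Fin n) :=
    ⟨fun c ↦ c i, fun _ _ ↦ rfl⟩
  exact expect_comp_of_coe_eq_orbit proj (coe_groupSet_eq_orbit hb)
    (coe_powersetCard_eq_orbit (b i)) f

theorem expect_groupSet_apply_pair (hG : (groupSet n k M).Nonempty) {i j : Fin M} (hij : i ≠ j)
    (f : Finset (Fin n) × Finset (Fin n) → E) :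
    𝔼 b ∈ groupSet n k M, f (b i, b j) = 𝔼 p ∈ disjointPairs (Fin n) k, f p := by
  obtain ⟨b, hb⟩ := hG
  obtain ⟨hcard, hdisj⟩ := mem_groupSet.mp hb
  let proj : (Fin M → Finset (Fin n)) →[Perm (Fin n)] Finset (Fin n) × Finset (Fin n) :=
    ⟨fun c ↦ (c i, c j), fun _ _ ↦ rfl⟩
  exact expect_comp_of_coe_eq_orbit proj (coe_groupSet_eq_orbit hb)
    (coe_disjointPairs_eq_orbit (mem_disjointPairs.mpr ⟨⟨hcard i, hcard j⟩, hdisj hij⟩)) f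

end MatchedGroups

section Estimators

variable (n k M : ℕ) (h : Finset (Fin n) → ℝ)

theorem VSD_eq_expect :
    VSD n k h = 𝔼 S ∈ powersetCard k univ, (h S - UstatD n k h) ^ 2 := by
  rw [VSD, expect_eq_sum_div_card, card_powersetCard, card_univ, Fintype.card_fin,
    inv_mul_eq_div]

theorem VHD_eq_expect :
    VHD n k h = 𝔼 p ∈ disjointPairs (Fin n) k, (h p.1 - h p.2) ^ 2 / 2 := by
  rw [expect_eq_sum_div_card, card_disjointPairs]
  simp only [VHD, Fintype.card_fin, Nat.cast_mul, inv_mul_eq_div, disjointPairs, sum_filter,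
    sum_product, disjoint_iff_inter_eq_empty]

theorem groupMeanD_eq_expect (b : Fin M → Finset (Fin n)) :
    groupMeanD n k M h b = 𝔼 i, h (b i) := by
  rw [groupMeanD, Fintype.expect_eq_sum_div_card, Fintype.card_fin, inv_mul_eq_div]

theorem sigmaWP_eq_expect :
    sigmaWP n k M h = 𝔼 b ∈ groupSet n k M,
      ((M : ℝ) - 1)⁻¹ * ∑ i, (h (b i) - groupMeanD n k M h b) ^ 2 := by
  rw [sigmaWP, expect_eq_sum_div_card, inv_mul_eq_div]

theorem sigmaBP_eq_expect :
    sigmaBP n k M h = 𝔼 b ∈ groupSet n k M, (groupMeanD n k M h b - UstatD n k h) ^ 2 := by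
  rw [sigmaBP, expect_eq_sum_div_card, inv_mul_eq_div]

variable {n k M}

theorem sigmaWP_eq_VHD (hM : 2 ≤ M) (hG : (groupSet n k M).Nonempty) :
    sigmaWP n k M h = VHD n k h := by
  have offDiag_nonempty : (univ : Finset (Fin M)).offDiag.Nonempty :=
    ⟨(⟨0, by omega⟩, ⟨1, by omega⟩), by simp⟩
  calc sigmaWP n k M h
      = 𝔼 b ∈ groupSet n k M, 𝔼 p ∈ univ.offDiag, (h (b p.1) - h (b p.2)) ^ 2 / 2 := by
        rw [sigmaWP_eq_expect]
        refine expect_congr rfl fun b _ ↦ ?_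
        rw [groupMeanD_eq_expect, expect_offDiag_sub_sq_div_two univ fun i ↦ h (b i), card_univ,
          Fintype.card_fin]
    _ = 𝔼 p ∈ univ.offDiag, 𝔼 b ∈ groupSet n k M, (h (b p.1) - h (b p.2)) ^ 2 / 2 :=
        expect_comm ..
    _ = 𝔼 _p ∈ (univ : Finset (Fin M)).offDiag, VHD n k h :=
        expect_congr rfl fun p hp ↦ by
          rw [VHD_eq_expect, ← expect_groupSet_apply_pair hG (mem_offDiag.mp hp).2.2]
    _ = VHD n k h := expect_const offDiag_nonempty _

theorem VSD_eq_sigmaBP_add_mul_sigmaWP (hM : 2 ≤ M) (hG : (groupSet n k M).Nonempty) :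
    VSD n k h = sigmaBP n k M h + (1 - 1 / (M : ℝ)) * sigmaWP n k M h := by
  have : NeZero M := ⟨by omega⟩
  have hM₁ : (M : ℝ) - 1 ≠ 0 := sub_ne_zero.mpr (mod_cast (by omega : M ≠ 1))
  have group_decomposition (b : Fin M → Finset (Fin n)) :
      𝔼 i, (h (b i) - UstatD n k h) ^ 2 = (groupMeanD n k M h b - UstatD n k h) ^ 2 +
        (1 - 1 / (M : ℝ)) * (((M : ℝ) - 1)⁻¹ * ∑ i, (h (b i) - groupMeanD n k M h b) ^ 2) := by
    rw [groupMeanD_eq_expect, Fintype.expect_eq_sum_div_card,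
      sum_sub_sq_eq_sum_sub_expect_sq_add univ (fun i ↦ h (b i)), card_univ, Fintype.card_fin]
    field_simp
    ring
  calc VSD n k h
      = 𝔼 i : Fin M, 𝔼 b ∈ groupSet n k M, (h (b i) - UstatD n k h) ^ 2 := by
        simp only [VSD_eq_expect, expect_groupSet_apply hG _ (fun S ↦ (h S - UstatD n k h) ^ 2),
          Fintype.expect_const]
    _ = 𝔼 b ∈ groupSet n k M, 𝔼 i, (h (b i) - UstatD n k h) ^ 2 := expect_comm ..
    _ = sigmaBP n k M h + (1 - 1 / (M : ℝ)) * sigmaWP n k M h := by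
        simp only [group_decomposition, expect_add_distrib, ← mul_expect, sigmaBP_eq_expect,
          sigmaWP_eq_expect]

end Estimators

theorem complete_estimator_eq_partition_estimator
    (n k M : ℕ) (hk : 1 ≤ k) (hM : 2 ≤ M) (hMk : M * k ≤ n)
    (h : Finset (Fin n) → ℝ) :
    VHD n k h = sigmaWP n k M h ∧
    VHD n k h - VSD n k h = sigmaWP n k M h / (M : ℝ) - sigmaBP n k M h := by
  have hG : (groupSet n k M).Nonempty := groupSet_nonempty hMk
  have hWP : sigmaWP n k M h = VHD n k h := sigmaWP_eq_VHD h hM hG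
  refine ⟨hWP.symm, ?_⟩
  rw [VSD_eq_sigmaBP_add_mul_sigmaWP h hM hG, hWP]
  ring

end
end
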